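/- Let p be a prime, λ_1 ≥ ⋯ ≥ λ_t ≥ 1 integers, and U = ℤ/p^{λ_1}ℤ ⊕ ⋯ ⊕ ℤ/p^{λ_t}ℤ with standard generators u_1,…,u_t. Suppose E, F ∈ GL_t(ℤ/pℤ) satisfy: E_{ij} = 0 whenever λ_j < λ_i; F_{ij} = 0 whenever λ_j > λ_i; and E_{ij} = F_{ij} whenever λ_i = λ_j. Then there exists an additive automorphism π of U such that the matrix of π|_{Ω₁(U)} with respect to the basis (p^{λ_i−1}u_i) of Ω₁(U) is E, and the matrix of the induced automorphism of Ū = U/pU with respect to the basis (ū_i) is F. -/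

import Mathlib

open Matrix

/-- The abelian group `U = ℤ/p^{λ₁}ℤ ⊕ ⋯ ⊕ ℤ/p^{λ_t}ℤ`. -/
abbrev Umod (p t : ℕ) (lam : Fin t → ℕ) : Type := ∀ j : Fin t, ZMod (p ^ lam j)

/-- The standard generator `uᵢ` of the `i`-th summand of `U`. -/
def uGen (p t : ℕ) (lam : Fin t → ℕ) (i : Fin t) : Umod p t lam :=
  Pi.single i (1 : ZMod (p ^ lam i))

/-!
Let `U = ⨁ᵢ ℤ/m^{λᵢ}ℤ` with standard generators `uᵢ`. Take the integer matrix `A` with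
`A i j = m ^ (λⱼ - λᵢ) * (E i j).val` where `λᵢ < λⱼ`, and `A i j = (F i j).val` elsewhere.
The endomorphism `uᵢ ↦ ∑ⱼ A i j • uⱼ` of `U` is well defined because `m ^ λⱼ` divides
`m ^ λᵢ * A i j`. The conditions on `E` and `F` give `A ≡ F` modulo `m` and
`m ^ (λᵢ - 1) * A i j ≡ (E i j).val * m ^ (λⱼ - 1)` modulo `m ^ λⱼ`, so the endomorphism induces `F`
on `U / mU` and `E` on `Ω₁(U)`. Since `F` is invertible, its image generates `U` modulo `mU`, hence
is all of `U` because `m` acts nilpotently; finiteness of `U` turns surjectivity into bijectivity.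
-/

section NilpotentNakayama

variable {A ι : Type*} [AddCommGroup A] {m k : ℕ}

theorem eq_top_of_sup_range_nsmul_eq_top {H : AddSubgroup A}
    (hk : ∀ x : A, m ^ k • x ∈ H) (hH : H ⊔ (nsmulAddMonoidHom m).range = ⊤) : H = ⊤ := by
  induction k with
  | zero => exact (AddSubgroup.eq_top_iff' H).2 (by simpa using hk)
  | succ k ih =>
    refine ih fun x => ?_
    have hx : x ∈ H ⊔ (nsmulAddMonoidHom m).range := hH ▸ AddSubgroup.mem_top x
    obtain ⟨a, ha, _, ⟨y, rfl⟩, rfl⟩ := AddSubgroup.mem_sup.1 hx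
    rw [nsmulAddMonoidHom_apply, smul_add, smul_smul, ← pow_succ]
    exact H.add_mem (H.nsmul_mem ha _) (hk y)

variable [Fintype ι] [DecidableEq ι] {M : Matrix ι ι ℤ} {u : ι → A}

open Matrix.Module in
theorem mem_of_sum_zsmul_mem {S : AddSubgroup A} (hS : ∀ x : A, m • x ∈ S)
    (hM : IsUnit (M.map (Int.cast : ℤ → ZMod m)))
    (hu : ∀ i, ∑ j, M i j • u j ∈ S) (i : ι) : u i ∈ S := by
  let _ : Module (ZMod m) (A ⧸ S) := QuotientAddGroup.zmodModule hS
  let q : ι → A ⧸ S := fun j => QuotientAddGroup.mk' S (u j)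
  have hMq : M.map (Int.cast : ℤ → ZMod m) • q = 0 := by
    funext i
    have hi : QuotientAddGroup.mk' S (∑ j, M i j • u j) = 0 :=
      (QuotientAddGroup.eq_zero_iff _).2 (hu i)
    simpa only [Matrix.Module.smul_apply, Matrix.map_apply, Int.cast_smul_eq_zsmul, map_sum,
      map_zsmul, Pi.zero_apply, q] using hi
  exact (QuotientAddGroup.eq_zero_iff _).1 (congrFun (hM.smul_eq_zero.1 hMq) i)

theorem surjective_of_map_eq_sum_zsmul (hA : ∀ x : A, m ^ k • x = 0)
    (hspan : AddSubgroup.closure (Set.range u) = ⊤)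
    (hM : IsUnit (M.map (Int.cast : ℤ → ZMod m)))
    {f : A →+ A} (hf : ∀ i, f (u i) = ∑ j, M i j • u j) : Function.Surjective f := by
  let S := f.range ⊔ (nsmulAddMonoidHom (α := A) m).range
  have hmS (x : A) : m • x ∈ S := AddSubgroup.mem_sup_right ⟨x, rfl⟩
  have hfS (i : ι) : ∑ j, M i j • u j ∈ S := AddSubgroup.mem_sup_left ⟨u i, hf i⟩
  have hS : S = ⊤ := by
    rw [eq_top_iff, ← hspan, AddSubgroup.closure_le]
    rintro _ ⟨i, rfl⟩
    exact mem_of_sum_zsmul_mem hmS hM hfS i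
  exact AddMonoidHom.range_eq_top.1
    (eq_top_of_sup_range_nsmul_eq_top (fun x => hA x ▸ zero_mem _) hS)

end NilpotentNakayama

section PiZMod

variable {ι : Type*}

theorem pow_sup_nsmul_eq_zero [Fintype ι] (m : ℕ) (lam : ι → ℕ) (x : ∀ i, ZMod (m ^ lam i)) :
    m ^ Finset.univ.sup lam • x = 0 := by
  funext i
  have hdvd : m ^ lam i ∣ m ^ Finset.univ.sup lam :=
    pow_dvd_pow m (Finset.le_sup (Finset.mem_univ i))
  rw [Pi.smul_apply, nsmul_eq_mul, (ZMod.natCast_eq_zero_iff _ _).2 hdvd, zero_mul, Pi.zero_apply]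

variable [DecidableEq ι] {n : ι → ℕ}

theorem zsmul_single_one_eq_of_modEq {j : ι} {a b : ℤ} (h : a ≡ b [ZMOD n j]) :
    a • (Pi.single j 1 : ∀ j, ZMod (n j)) = b • Pi.single j 1 := by
  rw [← Pi.single_smul, ← Pi.single_smul, zsmul_one, zsmul_one,
    (ZMod.intCast_eq_intCast_iff a b (n j)).2 h]

variable [Finite ι]

theorem closure_range_single_one :
    AddSubgroup.closure (Set.range fun i => (Pi.single i 1 : ∀ i, ZMod (n i))) = ⊤ := by
  cases nonempty_fintype ι
  refine (AddSubgroup.eq_top_iff' _).2 fun x => ?_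
  rw [← Finset.univ_sum_single x]
  refine sum_mem fun i _ => ?_
  rw [← ZMod.intCast_zmod_cast (x i), ← zsmul_one, Pi.single_smul]
  exact zsmul_mem (AddSubgroup.subset_closure (Set.mem_range_self i)) _

theorem exists_addMonoidHom_single_one_eq {A : Type*} [AddCommGroup A] {v : ι → A}
    (hv : ∀ i, n i • v i = 0) :
    ∃ f : (∀ i, ZMod (n i)) →+ A, ∀ i, f (Pi.single i 1) = v i := by
  cases nonempty_fintype ι
  let c (i : ι) : {c : ℤ →+ A // c (n i) = 0} := ⟨zmultiplesHom A (v i), by simp [hv i]⟩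
  let g (i : ι) : ZMod (n i) →+ A := ZMod.lift (n i) (c i)
  have hg (i : ι) : g i 1 = v i := by
    simpa [g, c] using ZMod.lift_coe (n i) (c i) 1
  exact ⟨AddMonoidHom.noncommPiCoprod g fun _ _ _ _ _ => AddCommute.all _ _,
    fun i => (AddMonoidHom.noncommPiCoprod_single g i 1).trans (hg i)⟩

theorem exists_addMonoidHom_single_one_eq_sum {κ : Type*} [Fintype κ] [DecidableEq κ] {n' : κ → ℕ}
    {M : Matrix ι κ ℤ} (hM : ∀ i j, (n' j : ℤ) ∣ n i * M i j) :
    ∃ f : (∀ i, ZMod (n i)) →+ (∀ j, ZMod (n' j)),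
      ∀ i, f (Pi.single i 1) = ∑ j, M i j • Pi.single j 1 := by
  refine exists_addMonoidHom_single_one_eq fun i => ?_
  rw [Finset.smul_sum]
  refine Finset.sum_eq_zero fun j _ => ?_
  rw [← natCast_zsmul, smul_smul,
    zsmul_single_one_eq_of_modEq (Int.modEq_zero_iff_dvd.2 (hM i j)), zero_smul]

end PiZMod

section LiftMatrix

variable {ι : Type*} {m : ℕ} {lam : ι → ℕ} {E F : Matrix ι ι (ZMod m)}

/-- The integer matrix whose `i`-th row lists the coordinates of the image of the `i`-th generator
of `⨁ᵢ ℤ/m^{λᵢ}ℤ` under the lift of the pair `(E, F)`; residues are represented in `[0, m)`. -/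
def liftMatrix (lam : ι → ℕ) (E F : Matrix ι ι (ZMod m)) : Matrix ι ι ℤ := fun i j =>
  if lam i < lam j then (m : ℤ) ^ (lam j - lam i) * (E i j).val else (F i j).val

theorem pow_dvd_pow_mul_liftMatrix (i j : ι) :
    (m : ℤ) ^ lam j ∣ (m : ℤ) ^ lam i * liftMatrix lam E F i j := by
  unfold liftMatrix
  split_ifs with hij
  · rw [← mul_assoc, ← pow_add, Nat.add_sub_cancel' hij.le]
    exact dvd_mul_right _ _
  · exact (pow_dvd_pow _ (not_lt.1 hij)).mul_right _

theorem liftMatrix_map_intCast [NeZero m] (hF : ∀ i j, lam i < lam j → F i j = 0) :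
    (liftMatrix lam E F).map (Int.cast : ℤ → ZMod m) = F := by
  ext i j
  rw [Matrix.map_apply, liftMatrix]
  split_ifs with hij
  · simp [hF i j hij, (Nat.sub_pos_of_lt hij).ne']
  · simp

theorem pow_mul_liftMatrix_modEq (hpos : ∀ i, 1 ≤ lam i)
    (hE : ∀ i j, lam j < lam i → E i j = 0)
    (hEF : ∀ i j, lam i = lam j → E i j = F i j) (i j : ι) :
    (m : ℤ) ^ (lam i - 1) * liftMatrix lam E F i j ≡
      (E i j).val * (m : ℤ) ^ (lam j - 1) [ZMOD (m ^ lam j : ℕ)] := by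
  have hi := hpos i
  unfold liftMatrix
  rcases lt_trichotomy (lam i) (lam j) with hij | hij | hij
  · rw [if_pos hij, ← mul_assoc, ← pow_add, mul_comm,
      show lam i - 1 + (lam j - lam i) = lam j - 1 by lia]
  · rw [if_neg hij.not_lt, hEF i j hij, hij, mul_comm]
  · rw [if_neg hij.not_gt, hE i j hij, ZMod.val_zero, Nat.cast_zero, zero_mul,
      Int.modEq_zero_iff_dvd, Nat.cast_pow]
    exact (pow_dvd_pow _ (by lia)).mul_right _

end LiftMatrix

theorem exists_zsmul_sub_val_nsmul_eq {A : Type*} [AddCommGroup A] {m : ℕ} [NeZero m] {a : ℤ}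
    {c : ZMod m} (h : (a : ZMod m) = c) (x : A) : ∃ y, a • x - c.val • x = m • y := by
  obtain ⟨d, hd⟩ : (m : ℤ) ∣ a - c.val := by
    rw [← ZMod.intCast_zmod_eq_zero_iff_dvd]
    simp [h]
  exact ⟨d • x, by rw [← natCast_zsmul, ← sub_smul, hd, mul_smul, natCast_zsmul]⟩

theorem matrix_lift_general {ι : Type*} [Fintype ι] [DecidableEq ι] {m : ℕ} [NeZero m]
    {lam : ι → ℕ} (hpos : ∀ j, 1 ≤ lam j) {E F : Matrix ι ι (ZMod m)} (hF_unit : IsUnit F)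
    (hE : ∀ i j, lam j < lam i → E i j = 0)
    (hF : ∀ i j, lam i < lam j → F i j = 0)
    (hEF : ∀ i j, lam i = lam j → E i j = F i j) :
    ∃ π : (∀ i, ZMod (m ^ lam i)) ≃+ (∀ i, ZMod (m ^ lam i)),
      (∀ i, π (m ^ (lam i - 1) • Pi.single i 1) =
        ∑ j, (E i j).val • (m ^ (lam j - 1) • Pi.single j 1)) ∧
      (∀ i, ∃ y, π (Pi.single i 1) - ∑ j, (F i j).val • Pi.single j 1 = m • y) := by
  let u (i : ι) : ∀ i, ZMod (m ^ lam i) := Pi.single i 1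
  let A := liftMatrix lam E F
  have hAF : A.map (Int.cast : ℤ → ZMod m) = F := liftMatrix_map_intCast hF
  have hA_dvd (i j : ι) : ((m ^ lam j : ℕ) : ℤ) ∣ (m ^ lam i : ℕ) * A i j :=
    mod_cast pow_dvd_pow_mul_liftMatrix i j
  obtain ⟨f, hf⟩ : ∃ f : (∀ i, ZMod (m ^ lam i)) →+ (∀ i, ZMod (m ^ lam i)),
      ∀ i, f (u i) = ∑ j, A i j • u j := exists_addMonoidHom_single_one_eq_sum hA_dvd
  have hsurj : Function.Surjective f :=
    surjective_of_map_eq_sum_zsmul (pow_sup_nsmul_eq_zero m lam) closure_range_single_one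
      (hAF ▸ hF_unit) hf
  refine ⟨.ofBijective f hsurj.bijective_of_finite, fun i => ?_, fun i => ?_⟩
  · calc f (m ^ (lam i - 1) • u i)
      _ = ∑ j, ((m : ℤ) ^ (lam i - 1) * A i j) • u j := by
        rw [map_nsmul, hf, Finset.smul_sum]
        simp only [← natCast_zsmul, smul_smul, Nat.cast_pow]
      _ = ∑ j, ((E i j).val * (m : ℤ) ^ (lam j - 1)) • u j :=
        Finset.sum_congr rfl fun j _ =>
          zsmul_single_one_eq_of_modEq (pow_mul_liftMatrix_modEq hpos hE hEF i j)
      _ = ∑ j, (E i j).val • (m ^ (lam j - 1) • u j) := by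
        simp only [← natCast_zsmul, smul_smul, Nat.cast_pow]
  · have hA (j : ι) : (A i j : ZMod m) = F i j := congrFun₂ hAF i j
    choose y hy using fun j => exists_zsmul_sub_val_nsmul_eq (hA j) (u j)
    refine ⟨∑ j, y j, ?_⟩
    calc f (u i) - ∑ j, (F i j).val • u j
      _ = ∑ j, (A i j • u j - (F i j).val • u j) := by rw [hf, Finset.sum_sub_distrib]
      _ = m • ∑ j, y j := by rw [Finset.smul_sum, Finset.sum_congr rfl fun j _ => hy j]

/-- Given `E, F ∈ GL_t(ℤ/pℤ)` with `Eᵢⱼ = 0` when `λⱼ < λᵢ`, `Fᵢⱼ = 0` when `λⱼ > λᵢ` and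
`Eᵢⱼ = Fᵢⱼ` when `λᵢ = λⱼ`, there is an additive automorphism `π` of `U = ⊕ᵢ ℤ/p^{λᵢ}ℤ`
whose restriction to `Ω₁(U)` has matrix `E` in the basis `(p^{λᵢ−1} uᵢ)` and whose induced
automorphism of `U/pU` has matrix `F` in the basis `(ūᵢ)`. -/
theorem matrix_lift (p t : ℕ) (hp : p.Prime) (lam : Fin t → ℕ)
    (hmono : Antitone lam) (hpos : ∀ j, 1 ≤ lam j)
    (E F : GL (Fin t) (ZMod p))
    (hE : ∀ i j, lam j < lam i → (E : Matrix (Fin t) (Fin t) (ZMod p)) i j = 0)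
    (hF : ∀ i j, lam i < lam j → (F : Matrix (Fin t) (Fin t) (ZMod p)) i j = 0)
    (hEF : ∀ i j, lam i = lam j → (E : Matrix (Fin t) (Fin t) (ZMod p)) i j =
      (F : Matrix (Fin t) (Fin t) (ZMod p)) i j) :
    ∃ π : Umod p t lam ≃+ Umod p t lam,
      (∀ i, π (p ^ (lam i - 1) • uGen p t lam i) =
        ∑ j, ((E : Matrix (Fin t) (Fin t) (ZMod p)) i j).val •
          (p ^ (lam j - 1) • uGen p t lam j)) ∧
      (∀ i, ∃ y : Umod p t lam,
        π (uGen p t lam i) -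
          ∑ j, ((F : Matrix (Fin t) (Fin t) (ZMod p)) i j).val • uGen p t lam j = p • y) := by
  have : NeZero p := ⟨hp.ne_zero⟩
  exact matrix_lift_general hpos F.isUnit hE hF hEF
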